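/- arXiv:1904.10815 — 2 statements merged into one kernel-verified Lean document; each statement's English description precedes it below -/
import Mathlib

section
/- Let α ∈ [0,1) be irrational. The set X(√t, α) = { √n · e^{2πi n α} : n ∈ ℕ } ⊂ ℂ is a Delone set if and only if α is badly approximable. -/
/-- The Fermat-spiral point set `X(√t, α) = { √n·e^{2πi n α} : n ∈ ℕ } ⊆ ℂ`. -/
noncomputable def fermatSpiral (α : ℝ) : Set ℂ :=
  {z : ℂ | ∃ n : ℕ, z = Real.sqrt n * Complex.exp (2 * Real.pi * Complex.I * (n * α))}

/-- `X ⊆ ℂ` is relatively dense: some radius `r > 0` such that every open ball of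
radius `r` meets `X`. -/
def IsRelativelyDense (X : Set ℂ) : Prop :=
  ∃ r : ℝ, 0 < r ∧ ∀ x : ℂ, ∃ z ∈ X, z ∈ Metric.ball x r

/-- `X ⊆ ℂ` is uniformly discrete: some radius `s > 0` such that every open ball of
radius `s` contains at most one point of `X`. -/
def IsUniformlyDiscrete (X : Set ℂ) : Prop :=
  ∃ s : ℝ, 0 < s ∧ ∀ x : ℂ, Set.Subsingleton (X ∩ Metric.ball x s)

/-- `X ⊆ ℂ` is a Delone set: relatively dense and uniformly discrete. -/
def IsDeloneSet (X : Set ℂ) : Prop :=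
  IsRelativelyDense X ∧ IsUniformlyDiscrete X

/-- `α` is badly approximable: `q·|qα − p| ≥ C > 0` for all `p ∈ ℤ`, `q ∈ ℕ`, `q ≥ 1`. -/
def IsBadlyApproximable (α : ℝ) : Prop :=
  ∃ C : ℝ, 0 < C ∧ ∀ (p : ℤ) (q : ℕ), 1 ≤ q → C ≤ (q : ℝ) * |(q : ℝ) * α - (p : ℝ)|


/-!
For `q ≤ n`, the spiral points with indices `n` and `n + q` have radii differing by about
`q / (2√n)` and directions differing by the distance `‖qα‖` from `qα` to the nearest integer, so
their distance is comparable to `q / √n + √n ‖qα‖`. By AM-GM this is at least of order `√(q ‖qα‖)`,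
so bad approximability gives uniform discreteness. Conversely, for `n = (kq)²` with a large
constant `k` the first summand is negligible, and a lower bound on the distance is one on `q ‖qα‖`.

An annulus of radius `R` and width `1` contains more than `R` consecutive spiral points. If `α` is
badly approximable, any `R` consecutive multiples of `α` are `O(1/R)`-dense modulo one, so the
points in this annulus come within a bounded distance of each point of the circle of radius `R`.
-/

open AddCircle Real

section RealInequalities

lemma sqrt_sq_add_le {a h : ℝ} (ha : 0 < a) (hh : 0 ≤ h) : √(a ^ 2 + h) ≤ a + h / (2 * a) := by
  have square : (a + h / (2 * a)) ^ 2 = a ^ 2 + h + (h / (2 * a)) ^ 2 := by field_simp; ring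
  exact sqrt_le_iff.2 ⟨by positivity, by linarith [sq_nonneg (h / (2 * a))]⟩

/-- For `b ≤ 2 a` the two summands are balanced by AM-GM; otherwise the first is large by itself. -/
lemma min_le_sub_sq_add_mul_sq {a b t C : ℝ} (ha : 0 ≤ a) (hb : 1 ≤ b) (ht : 0 ≤ t)
    (hC : C ≤ (b ^ 2 - a ^ 2) * t) :
    min (1 / 4) (2 * C) ≤ (b - a) ^ 2 + a * b * (4 * t) ^ 2 := by
  rcases le_or_gt b (2 * a) with comparable | far
  · refine (min_le_right _ _).trans ?_
    have amgm : 2 * (b - a) * (2 * b * t) ≤ (b - a) ^ 2 + (2 * b * t) ^ 2 := two_mul_le_add_sq _ _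
    have factor : (b ^ 2 - a ^ 2) * t ≤ (b - a) * (2 * b * t) := by
      have : 0 ≤ (b - a) ^ 2 * t := by positivity
      linarith
    have angular : (2 * b * t) ^ 2 ≤ a * b * (4 * t) ^ 2 := by
      have : 0 ≤ (4 * a - b) * (b * t ^ 2) := mul_nonneg (by linarith) (by positivity)
      linarith
    linarith
  · refine (min_le_left _ _).trans ?_
    have : 0 ≤ a * b * (4 * t) ^ 2 := by positivity
    nlinarith

end RealInequalities

section PolarCoordinates

lemma norm_smul_sub_smul_le {𝕜 E : Type*} [NormedField 𝕜] [SeminormedAddCommGroup E]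
    [NormedSpace 𝕜 E] (a b : 𝕜) (u v : E) :
    ‖b • v - a • u‖ ≤ ‖b - a‖ * ‖v‖ + ‖a‖ * ‖v - u‖ := by
  have split : b • v - a • u = (b - a) • v + a • (v - u) := by module
  simpa only [split, norm_smul] using norm_add_le ((b - a) • v) (a • (v - u))

lemma norm_smul_sub_smul_sq {E : Type*} [SeminormedAddCommGroup E] [InnerProductSpace ℝ E]
    (a b : ℝ) (u v : E) :
    ‖b • v - a • u‖ ^ 2 =
      (b - a) * (b * ‖v‖ ^ 2 - a * ‖u‖ ^ 2) + a * b * ‖v - u‖ ^ 2 := by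
  simp only [norm_sub_sq_real, norm_smul, inner_smul_left, inner_smul_right, mul_pow,
    Real.norm_eq_abs, sq_abs, conj_trivial]
  ring

lemma exists_coe_eq_and_abs_eq_norm {p : ℝ} (x : AddCircle p) : ∃ t : ℝ, ↑t = x ∧ |t| = ‖x‖ := by
  induction x using QuotientAddGroup.induction_on with | H t =>
  refine ⟨t - round (p⁻¹ * t) * p, ?_, (AddCircle.norm_eq p).symm⟩
  rw [coe_sub, sub_eq_self, coe_eq_zero_iff]
  exact ⟨round (p⁻¹ * t), zsmul_eq_mul _ _⟩

lemma norm_unitAddCircle_le_half (x : UnitAddCircle) : ‖x‖ ≤ 1 / 2 := by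
  simpa using norm_le_half_period 1 one_ne_zero (x := x)

lemma norm_toCircle_sub_one (x : UnitAddCircle) :
    ‖(toCircle x : ℂ) - 1‖ = 2 * sin (π * ‖x‖) := by
  obtain ⟨t, rfl, ht⟩ := exists_coe_eq_and_abs_eq_norm x
  have half : |π * t| ≤ π := by
    rw [abs_mul, abs_of_pos pi_pos, ht]
    nlinarith [pi_pos, norm_unitAddCircle_le_half t]
  calc ‖(toCircle (t : UnitAddCircle) : ℂ) - 1‖
      = ‖Complex.exp (Complex.I * ↑(2 * (π * t))) - 1‖ := by
        rw [toCircle_apply_mk, div_one, Circle.coe_exp, mul_comm Complex.I, mul_assoc]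
    _ = 2 * |sin (π * t)| := by
        rw [Complex.norm_exp_I_mul_ofReal_sub_one, norm_mul, Real.norm_two,
          mul_div_cancel_left₀ _ two_ne_zero, Real.norm_eq_abs]
    _ = 2 * sin (π * ‖(t : UnitAddCircle)‖) := by
        rw [abs_sin_eq_sin_abs_of_abs_le_pi half, abs_mul, abs_of_pos pi_pos, ht]

lemma norm_toCircle_sub_toCircle (x y : UnitAddCircle) :
    ‖(toCircle x : ℂ) - toCircle y‖ = 2 * sin (π * ‖x - y‖) := by
  have rotate : (toCircle x : ℂ) - toCircle y = toCircle y * (toCircle (x - y) - 1) := by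
    rw [mul_sub, mul_one, ← Circle.coe_mul, ← toCircle_add, add_sub_cancel]
  rw [rotate, norm_mul, Circle.norm_coe, one_mul, norm_toCircle_sub_one]

lemma norm_toCircle_sub_toCircle_le (x y : UnitAddCircle) :
    ‖(toCircle x : ℂ) - toCircle y‖ ≤ 2 * π * ‖x - y‖ := by
  rw [norm_toCircle_sub_toCircle, mul_assoc]
  gcongr
  exact sin_le (by positivity)

lemma four_mul_norm_sub_le_norm_toCircle_sub_toCircle (x y : UnitAddCircle) :
    4 * ‖x - y‖ ≤ ‖(toCircle x : ℂ) - toCircle y‖ := by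
  have jordan : 2 / π * (π * ‖x - y‖) ≤ sin (π * ‖x - y‖) :=
    mul_le_sin (by positivity) (by nlinarith [pi_pos, norm_unitAddCircle_le_half (x - y)])
  rw [← mul_assoc, div_mul_cancel₀ _ pi_ne_zero] at jordan
  linarith [norm_toCircle_sub_toCircle x y]

lemma exists_norm_smul_toCircle_eq (z : ℂ) :
    ∃ θ : UnitAddCircle, ‖z‖ • (toCircle θ : ℂ) = z := by
  refine ⟨(z.arg / (2 * π) : ℝ), ?_⟩
  rw [toCircle_apply_mk, div_one, mul_div_cancel₀ _ two_pi_pos.ne', Circle.coe_exp,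
    Complex.real_smul, Complex.norm_mul_exp_arg_mul_I]

lemma dist_smul_toCircle_le {a : ℝ} (ha : 0 ≤ a) (b : ℝ) (x y : UnitAddCircle) :
    dist (b • (toCircle y : ℂ)) (a • (toCircle x : ℂ)) ≤ |b - a| + 2 * π * (a * ‖y - x‖) := by
  calc dist (b • (toCircle y : ℂ)) (a • (toCircle x : ℂ))
      ≤ |b - a| + a * ‖(toCircle y : ℂ) - toCircle x‖ := by
        simpa only [dist_eq_norm, Circle.norm_coe, Real.norm_eq_abs, abs_of_nonneg ha,
          mul_one] using norm_smul_sub_smul_le a b (toCircle x : ℂ) (toCircle y)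
    _ ≤ |b - a| + a * (2 * π * ‖y - x‖) := by gcongr; exact norm_toCircle_sub_toCircle_le y x
    _ = |b - a| + 2 * π * (a * ‖y - x‖) := by ring

lemma le_dist_smul_toCircle_sq {a b : ℝ} (hab : 0 ≤ a * b) (x y : UnitAddCircle) :
    (b - a) ^ 2 + a * b * (4 * ‖y - x‖) ^ 2 ≤
      dist (b • (toCircle y : ℂ)) (a • (toCircle x : ℂ)) ^ 2 := by
  calc (b - a) ^ 2 + a * b * (4 * ‖y - x‖) ^ 2
      ≤ (b - a) ^ 2 + a * b * ‖(toCircle y : ℂ) - toCircle x‖ ^ 2 := by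
        gcongr
        exact four_mul_norm_sub_le_norm_toCircle_sub_toCircle y x
    _ = dist (b • (toCircle y : ℂ)) (a • (toCircle x : ℂ)) ^ 2 := by
        rw [dist_eq_norm, norm_smul_sub_smul_sq, Circle.norm_coe, Circle.norm_coe]
        ring

end PolarCoordinates

section BadApproximability

/-- Quantitative bad approximability, of a number modulo one and with an explicit constant. The
norm of `UnitAddCircle` is the distance to the nearest integer, which takes care of the
numerators `p` in `IsBadlyApproximable`. -/
def IsBadlyApproximableWith (C : ℝ) (ξ : UnitAddCircle) : Prop :=
  ∀ q : ℕ, 1 ≤ q → C ≤ q * ‖q • ξ‖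

lemma isBadlyApproximable_iff_exists_with {α : ℝ} :
    IsBadlyApproximable α ↔ ∃ C > 0, IsBadlyApproximableWith C (α : UnitAddCircle) := by
  have norm_nsmul (q : ℕ) : ‖q • (α : UnitAddCircle)‖ = |q * α - round (q * α)| := by
    rw [← coe_nsmul, nsmul_eq_mul, UnitAddCircle.norm_eq]
  constructor
  · rintro ⟨C, hC, h⟩
    exact ⟨C, hC, fun q hq => norm_nsmul q ▸ h _ q hq⟩
  · rintro ⟨C, hC, h⟩
    refine ⟨C, hC, fun p q hq => (h q hq).trans ?_⟩
    rw [norm_nsmul]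
    gcongr q * ?_
    exact round_le _ p

lemma exists_lt_den_nsmul_coe_eq (r : ℚ) (t : ℤ) :
    ∃ j < r.den, j • ((r : ℝ) : UnitAddCircle) = ((t / r.den : ℝ) : UnitAddCircle) := by
  obtain ⟨u, v, bezout⟩ : IsCoprime r.num (r.den : ℤ) :=
    Int.isCoprime_iff_nat_coprime.2 r.reduced
  obtain ⟨j, hj, hjt⟩ := Int.existsUnique_equiv_nat (t * u) (Nat.cast_pos.2 r.pos)
  obtain ⟨m, hm⟩ := hjt.dvd
  refine ⟨j, by exact_mod_cast hj, ?_⟩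
  rw [← coe_nsmul, ← sub_eq_zero, ← coe_sub, coe_eq_zero_iff]
  have sub_eq : (j : ℤ) * r.num - t = (-(m * r.num) - t * v) * r.den := by
    linear_combination t * bezout - r.num * hm
  have sub_eq_real : (j : ℝ) * r.num - t = (-(m * r.num) - t * v) * r.den := by
    exact_mod_cast sub_eq
  refine ⟨-(m * r.num) - t * v, ?_⟩
  rw [Rat.cast_def]
  push_cast [zsmul_eq_mul, nsmul_eq_mul]
  field_simp
  linarith

lemma exists_lt_den_norm_nsmul_sub_le (r : ℚ) (θ : UnitAddCircle) :
    ∃ j < r.den, ‖j • ((r : ℝ) : UnitAddCircle) - θ‖ ≤ 1 / (2 * r.den) := by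
  induction θ using QuotientAddGroup.induction_on with | H β =>
  have den_pos : (0 : ℝ) < r.den := by exact_mod_cast r.pos
  obtain ⟨j, hj, hjt⟩ := exists_lt_den_nsmul_coe_eq r (round (β * r.den))
  refine ⟨j, hj, ?_⟩
  calc ‖j • ((r : ℝ) : UnitAddCircle) - (β : UnitAddCircle)‖
      = ‖((round (β * r.den) / r.den - β : ℝ) : UnitAddCircle)‖ := by rw [hjt, coe_sub]
    _ ≤ |round (β * r.den) / r.den - β| := QuotientAddGroup.norm_mk_le_norm
    _ = |β * r.den - round (β * r.den)| / r.den := by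
        rw [abs_sub_comm, ← abs_of_pos den_pos, ← abs_div, abs_of_pos den_pos, sub_div,
          mul_div_cancel_right₀ _ den_pos.ne']
    _ ≤ (1 / 2) / r.den := by gcongr; exact abs_sub_round _
    _ = 1 / (2 * r.den) := by rw [div_div]

lemma norm_nsmul_coe_sub_nsmul_coe_le {p : ℝ} (j : ℕ) (x y : ℝ) :
    ‖j • (x : AddCircle p) - j • (y : AddCircle p)‖ ≤ j * |x - y| := by
  rw [← nsmul_sub, ← coe_sub]
  refine norm_nsmul_le.trans ?_
  gcongr
  exact QuotientAddGroup.norm_mk_le_norm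

namespace IsBadlyApproximableWith

variable {C : ℝ} {ξ : UnitAddCircle}

lemma mul_le_den_of_abs_sub_le {α : ℝ} (h : IsBadlyApproximableWith C (α : UnitAddCircle))
    {r : ℚ} {D : ℝ} (hD : 0 < D) (hr : |α - r| ≤ 1 / (D * r.den)) : C * D ≤ r.den := by
  have den_nsmul : r.den • ((r : ℝ) : UnitAddCircle) = 0 := by
    rw [← coe_nsmul, coe_eq_zero_iff]
    exact ⟨r.num, by rw [zsmul_one, nsmul_eq_mul]; exact_mod_cast (Rat.den_mul_eq_num r).symm⟩
  have hC : C ≤ r.den / D :=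
    calc C ≤ r.den * ‖r.den • (α : UnitAddCircle)‖ := h _ r.pos
      _ ≤ r.den * (r.den * |α - r|) := by
          gcongr
          simpa only [den_nsmul, sub_zero] using
            norm_nsmul_coe_sub_nsmul_coe_le (p := 1) r.den α r
      _ ≤ r.den * (r.den * (1 / (D * r.den))) := by gcongr
      _ = r.den / D := by field_simp
  exact (le_div_iff₀ hD).1 hC

/-- By Dirichlet, `ξ` is within `1 / (Q q)` of a fraction with denominator `q ≤ Q`, and bad
approximability forces `q ≥ C Q`; so the first `q` multiples of `ξ` shadow all fractions with
denominator `q`, which are `1 / (C Q)`-dense. -/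
lemma exists_lt_norm_nsmul_sub_le (h : IsBadlyApproximableWith C ξ) (hC : 0 < C)
    {Q : ℕ} (hQ : 0 < Q) (θ : UnitAddCircle) :
    ∃ j < Q, ‖j • ξ - θ‖ ≤ (1 + 1 / (2 * C)) / Q := by
  induction ξ using QuotientAddGroup.induction_on with | H α =>
  have Q_pos : (0 : ℝ) < Q := by exact_mod_cast hQ
  obtain ⟨r, dirichlet, den_le⟩ := exists_rat_abs_sub_le_and_den_le α hQ
  have hr : |α - r| ≤ 1 / (Q * r.den) := dirichlet.trans (by gcongr; linarith)
  obtain ⟨j, hj, near⟩ := exists_lt_den_norm_nsmul_sub_le r θ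
  refine ⟨j, hj.trans_le den_le, ?_⟩
  have shadow : ‖j • (α : UnitAddCircle) - j • ((r : ℝ) : UnitAddCircle)‖ ≤ 1 / Q :=
    calc _ ≤ j * |α - r| := norm_nsmul_coe_sub_nsmul_coe_le j α r
      _ ≤ r.den * (1 / (Q * r.den)) := by gcongr
      _ = 1 / Q := by field_simp
  have dense : 1 / (2 * (r.den : ℝ)) ≤ 1 / (2 * (C * Q)) := by
    gcongr
    exact h.mul_le_den_of_abs_sub_le Q_pos hr
  calc _ ≤ _ := norm_sub_le_norm_sub_add_norm_sub _ (j • ((r : ℝ) : UnitAddCircle)) θ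
    _ ≤ 1 / Q + 1 / (2 * (C * Q)) := add_le_add shadow (near.trans dense)
    _ = (1 + 1 / (2 * C)) / Q := by field_simp

end IsBadlyApproximableWith

end BadApproximability

section SpiralPoints

/-- The point `√n · e^{2πi n ξ}` of the Fermat spiral, for an angle `ξ` given modulo one. -/
noncomputable def fermatSpiralPoint (ξ : UnitAddCircle) (n : ℕ) : ℂ :=
  √n • (toCircle (n • ξ) : ℂ)

lemma range_fermatSpiralPoint (α : ℝ) :
    Set.range (fermatSpiralPoint (α : UnitAddCircle)) = fermatSpiral α := by
  have point_eq (n : ℕ) : fermatSpiralPoint (α : UnitAddCircle) n =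
      √n * Complex.exp (2 * π * Complex.I * (n * α)) := by
    rw [fermatSpiralPoint, ← coe_nsmul, toCircle_apply_mk, Circle.coe_exp, Complex.real_smul]
    congr 2
    push_cast [nsmul_eq_mul]
    ring
  ext z
  simp only [Set.mem_range, fermatSpiral, Set.mem_ofPred_eq, point_eq, eq_comm]

lemma norm_fermatSpiralPoint (ξ : UnitAddCircle) (n : ℕ) : ‖fermatSpiralPoint ξ n‖ = √n := by
  rw [fermatSpiralPoint, norm_smul, Circle.norm_coe, mul_one, Real.norm_of_nonneg (sqrt_nonneg _)]

lemma fermatSpiralPoint_injective (ξ : UnitAddCircle) :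
    Function.Injective (fermatSpiralPoint ξ) := by
  intro m n hmn
  have norm_eq := congrArg norm hmn
  rw [norm_fermatSpiralPoint, norm_fermatSpiralPoint,
    sqrt_inj m.cast_nonneg n.cast_nonneg] at norm_eq
  exact_mod_cast norm_eq

variable (ξ : UnitAddCircle) (n q : ℕ)

lemma dist_fermatSpiralPoint_add_le :
    dist (fermatSpiralPoint ξ (n + q)) (fermatSpiralPoint ξ n) ≤
      (√(n + q) - √n) + 2 * π * (√n * ‖q • ξ‖) := by
  have radial : |√(n + q) - √n| = √(n + q) - √n :=
    abs_of_nonneg (sub_nonneg.2 (sqrt_le_sqrt (by simp)))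
  have bound := dist_smul_toCircle_le (sqrt_nonneg n) √(n + q) (n • ξ) ((n + q) • ξ)
  rw [radial, add_nsmul, add_sub_cancel_left] at bound
  simpa only [fermatSpiralPoint, add_nsmul, Nat.cast_add] using bound

lemma le_dist_fermatSpiralPoint_add_sq :
    (√(n + q) - √n) ^ 2 + √n * √(n + q) * (4 * ‖q • ξ‖) ^ 2 ≤
      dist (fermatSpiralPoint ξ (n + q)) (fermatSpiralPoint ξ n) ^ 2 := by
  have bound := le_dist_smul_toCircle_sq (mul_nonneg (sqrt_nonneg n) (sqrt_nonneg (n + q)))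
    (n • ξ) ((n + q) • ξ)
  rw [add_nsmul, add_sub_cancel_left] at bound
  simpa only [fermatSpiralPoint, add_nsmul, Nat.cast_add] using bound

end SpiralPoints

section UniformDiscreteness

lemma isUniformlyDiscrete_iff_exists_pairwise_le_dist {X : Set ℂ} :
    IsUniformlyDiscrete X ↔ ∃ d > 0, X.Pairwise fun x y => d ≤ dist x y := by
  constructor
  · rintro ⟨s, hs, h⟩
    refine ⟨s, hs, fun x hx y hy hxy => ?_⟩
    by_contra! close
    exact hxy (h y ⟨hx, close⟩ ⟨hy, Metric.mem_ball_self hs⟩)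
  · rintro ⟨d, hd, h⟩
    refine ⟨d / 2, half_pos hd, fun c x ⟨hx, hxc⟩ y ⟨hy, hyc⟩ => ?_⟩
    by_contra hxy
    linarith [h hx hy hxy, dist_triangle_right x y c, Metric.mem_ball.1 hxc, Metric.mem_ball.1 hyc]

lemma isUniformlyDiscrete_fermatSpiral_iff_exists_le_dist {α : ℝ} :
    IsUniformlyDiscrete (fermatSpiral α) ↔ ∃ d > 0, ∀ n q : ℕ, 1 ≤ q →
      d ≤ dist (fermatSpiralPoint α (n + q)) (fermatSpiralPoint α n) := by
  rw [isUniformlyDiscrete_iff_exists_pairwise_le_dist, ← range_fermatSpiralPoint]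
  refine exists_congr fun d => and_congr_right fun _ => ⟨fun h n q hq => ?_, fun h => ?_⟩
  · exact h (Set.mem_range_self _) (Set.mem_range_self _)
      ((fermatSpiralPoint_injective _).ne (by lia))
  · have separated {m n : ℕ} (hmn : m < n) :
        d ≤ dist (fermatSpiralPoint α n) (fermatSpiralPoint α m) := by
      simpa only [Nat.add_sub_cancel' hmn.le] using h m (n - m) (by lia)
    rintro _ ⟨m, rfl⟩ _ ⟨n, rfl⟩ hne
    rcases lt_or_gt_of_ne (ne_of_apply_ne _ hne) with hmn | hnm
    · simpa only [dist_comm] using separated hmn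
    · exact separated hnm

lemma dist_fermatSpiralPoint_sq_add_le (ξ : UnitAddCircle) {k q : ℕ} (hk : 1 ≤ k) (hq : 1 ≤ q) :
    dist (fermatSpiralPoint ξ ((k * q) ^ 2 + q)) (fermatSpiralPoint ξ ((k * q) ^ 2)) ≤
      1 / (2 * k) + 2 * π * k * (q * ‖q • ξ‖) := by
  have k_pos : (0 : ℝ) < k := by exact_mod_cast hk
  have q_pos : (0 : ℝ) < q := by exact_mod_cast hq
  have bound := dist_fermatSpiralPoint_add_le ξ ((k * q) ^ 2) q
  push_cast at bound
  have radial : √((k * q) ^ 2 + q) ≤ k * q + 1 / (2 * k) :=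
    (sqrt_sq_add_le (mul_pos k_pos q_pos) q_pos.le).trans_eq (by field_simp)
  rw [sqrt_sq (by positivity)] at bound
  linarith

lemma IsBadlyApproximableWith.of_forall_le_dist {ξ : UnitAddCircle} {d : ℝ}
    (h : ∀ n q : ℕ, 1 ≤ q → d ≤ dist (fermatSpiralPoint ξ (n + q)) (fermatSpiralPoint ξ n))
    {k : ℕ} (hk : 1 ≤ k) (hkd : 1 / k ≤ d) :
    IsBadlyApproximableWith (d / (4 * π * k)) ξ := by
  intro q hq
  have bound := (h _ q hq).trans (dist_fermatSpiralPoint_sq_add_le ξ hk hq)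
  have radial : 1 / (2 * (k : ℝ)) ≤ d / 2 := by
    rw [mul_comm, ← div_div]
    gcongr
  rw [div_le_iff₀ (by positivity)]
  linarith

lemma IsBadlyApproximableWith.min_le_dist_sq {C : ℝ} {ξ : UnitAddCircle}
    (h : IsBadlyApproximableWith C ξ) (n : ℕ) {q : ℕ} (hq : 1 ≤ q) :
    min (1 / 4) (2 * C) ≤
      dist (fermatSpiralPoint ξ (n + q)) (fermatSpiralPoint ξ n) ^ 2 := by
  have q_ge : (1 : ℝ) ≤ q := by exact_mod_cast hq
  refine (min_le_sub_sq_add_mul_sq (sqrt_nonneg n) ?_ (norm_nonneg (q • ξ)) ?_).trans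
    (le_dist_fermatSpiralPoint_add_sq ξ n q)
  · exact one_le_sqrt.2 (by linarith [n.cast_nonneg (α := ℝ)])
  · rw [sq_sqrt (by positivity), sq_sqrt (by positivity), add_sub_cancel_left]
    exact h q hq

theorem isUniformlyDiscrete_fermatSpiral_iff {α : ℝ} :
    IsUniformlyDiscrete (fermatSpiral α) ↔ IsBadlyApproximable α := by
  rw [isUniformlyDiscrete_fermatSpiral_iff_exists_le_dist, isBadlyApproximable_iff_exists_with]
  constructor
  · rintro ⟨d, hd, separated⟩
    obtain ⟨k, hk⟩ := exists_nat_one_div_lt hd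
    exact ⟨d / (4 * π * (k + 1 : ℕ)), by positivity,
      .of_forall_le_dist separated k.succ_pos (by exact_mod_cast hk.le)⟩
  · rintro ⟨C, hC, h⟩
    exact ⟨√(min (1 / 4) (2 * C)), by positivity,
      fun n q hq => sqrt_le_iff.2 ⟨dist_nonneg, h.min_le_dist_sq n hq⟩⟩

end UniformDiscreteness

section RelativeDensity

lemma IsBadlyApproximableWith.exists_sqrt_mem_Ico_and_mul_norm_le {C : ℝ} {ξ : UnitAddCircle}
    (h : IsBadlyApproximableWith C ξ) (hC : 0 < C) {R : ℝ} (hR : 0 ≤ R) (θ : UnitAddCircle) :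
    ∃ n : ℕ, √n ∈ Set.Ico R (R + 1) ∧ R * ‖n • ξ - θ‖ ≤ 1 + 1 / (2 * C) := by
  obtain ⟨j, hj, near⟩ :=
    h.exists_lt_norm_nsmul_sub_le hC (Nat.succ_pos ⌊R⌋₊) (θ - ⌈R ^ 2⌉₊ • ξ)
  have hjR : (j : ℝ) ≤ R := (Nat.cast_le.2 (Nat.lt_succ_iff.1 hj)).trans (Nat.floor_le hR)
  have ceil_lt : (⌈R ^ 2⌉₊ : ℝ) < R ^ 2 + 1 := Nat.ceil_lt_add_one (sq_nonneg R)
  have angle : ‖(⌈R ^ 2⌉₊ + j) • ξ - θ‖ ≤ (1 + 1 / (2 * C)) / (⌊R⌋₊ + 1) := by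
    convert near using 2
    · rw [add_nsmul]; abel
    · push_cast; rfl
  refine ⟨⌈R ^ 2⌉₊ + j, ⟨?_, ?_⟩, ?_⟩
  · refine le_sqrt_of_sq_le ?_
    push_cast
    linarith [Nat.le_ceil (R ^ 2), j.cast_nonneg (α := ℝ)]
  · rw [sqrt_lt' (by linarith)]
    push_cast
    nlinarith
  · calc R * ‖(⌈R ^ 2⌉₊ + j) • ξ - θ‖
        ≤ (⌊R⌋₊ + 1) * ((1 + 1 / (2 * C)) / (⌊R⌋₊ + 1)) := by
          gcongr
          exact (Nat.lt_floor_add_one R).le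
      _ = 1 + 1 / (2 * C) := by field_simp

theorem IsBadlyApproximable.isRelativelyDense_fermatSpiral {α : ℝ} (h : IsBadlyApproximable α) :
    IsRelativelyDense (fermatSpiral α) := by
  obtain ⟨C, hC, hα⟩ := isBadlyApproximable_iff_exists_with.1 h
  refine ⟨1 + 2 * π * (1 + 1 / (2 * C)), by positivity, fun z => ?_⟩
  obtain ⟨θ, polar⟩ := exists_norm_smul_toCircle_eq z
  obtain ⟨n, ⟨le_radius, radius_lt⟩, angle⟩ :=
    hα.exists_sqrt_mem_Ico_and_mul_norm_le hC (norm_nonneg z) θ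
  refine ⟨fermatSpiralPoint α n, range_fermatSpiralPoint α ▸ Set.mem_range_self n, ?_⟩
  calc dist (fermatSpiralPoint α n) z
      ≤ |√n - ‖z‖| + 2 * π * (‖z‖ * ‖n • (α : UnitAddCircle) - θ‖) := by
        simpa only [fermatSpiralPoint, polar] using
          dist_smul_toCircle_le (norm_nonneg z) √n θ (n • (α : UnitAddCircle))
    _ < 1 + 2 * π * (1 + 1 / (2 * C)) := by
        rw [abs_of_nonneg (sub_nonneg.2 le_radius)]
        exact add_lt_add_of_lt_of_le (by linarith) (by gcongr)

end RelativeDensity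

theorem fermatSpiral_delone_iff_badlyApproximable_general (α : ℝ) :
    IsDeloneSet (fermatSpiral α) ↔ IsBadlyApproximable α :=
  ⟨fun h => isUniformlyDiscrete_fermatSpiral_iff.1 h.2,
    fun h => ⟨h.isRelativelyDense_fermatSpiral, isUniformlyDiscrete_fermatSpiral_iff.2 h⟩⟩

/-- For irrational `α ∈ [0,1)`, the set `X(√t, α)` is a Delone set
if and only if `α` is badly approximable. -/
theorem fermatSpiral_delone_iff_badlyApproximable
    (α : ℝ) (hα : α ∈ Set.Ico (0 : ℝ) 1) (hirr : Irrational α) :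
    IsDeloneSet (fermatSpiral α) ↔ IsBadlyApproximable α :=
  fermatSpiral_delone_iff_badlyApproximable_general α
end

section
/- Let α ∈ [0,1) be irrational and suppose there is a constant C > 0 such that q·|qα − p| ≥ C for all (p,q) ∈ ℤ × ℕ with q ≥ 1. Then the set X(√t, α) = { √n · e^{2πi n α} : n ∈ ℕ } ⊂ ℂ is (√C / 2)-uniformly discrete. -/
/-!
For `m, n ∈ ℕ` let `t` be the distance from `(m - n)α` to the nearest integer. The squared distance
of the spiral points with indices `m` and `n` is `(√m - √n)² + 4√m√n sin²(π(m - n)α)`, and the sine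
is at least `2t` in absolute value. Completing a square bounds the result below by `|m - n| t`,
which is at least `C` by bad approximability.
-/

lemma two_mul_abs_sub_round_le_abs_sin_pi_mul (x : ℝ) :
    2 * |x - round x| ≤ |Real.sin (Real.pi * x)| := by
  have periodic : |Real.sin (Real.pi * (x - round x))| = |Real.sin (Real.pi * x)| := by
    rw [mul_sub, mul_comm Real.pi (round x : ℝ), Real.sin_sub_int_mul_pi, abs_mul, abs_zpow,
      abs_neg, abs_one, one_zpow, one_mul]
  have abs_pi_mul : |Real.pi * (x - round x)| = Real.pi * |x - round x| := by
    rw [abs_mul, abs_of_pos Real.pi_pos]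
  have small : |Real.pi * (x - round x)| ≤ Real.pi / 2 := by
    rw [abs_pi_mul]
    linarith [mul_le_mul_of_nonneg_left (abs_sub_round x) Real.pi_pos.le]
  calc 2 * |x - round x| = 2 / Real.pi * |Real.pi * (x - round x)| := by
        rw [abs_pi_mul]; field_simp
    _ ≤ |Real.sin (Real.pi * (x - round x))| := Real.mul_abs_le_abs_sin small
    _ = |Real.sin (Real.pi * x)| := periodic

lemma dist_ofReal_mul_exp_sq (a b u v : ℝ) :
    dist (a * Complex.exp (u * Complex.I)) (b * Complex.exp (v * Complex.I)) ^ 2 =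
      (a - b) ^ 2 + 4 * (a * b) * Real.sin ((u - v) / 2) ^ 2 := by
  have law_of_cosines : dist (a * Complex.exp (u * Complex.I)) (b * Complex.exp (v * Complex.I)) ^ 2
      = a ^ 2 + b ^ 2 - 2 * (a * b) * Real.cos (u - v) := by
    rw [Complex.dist_eq, Complex.sq_norm, Complex.normSq_apply, Complex.sub_re, Complex.sub_im,
      Complex.re_ofReal_mul, Complex.re_ofReal_mul, Complex.im_ofReal_mul, Complex.im_ofReal_mul,
      Complex.exp_ofReal_mul_I_re, Complex.exp_ofReal_mul_I_re,
      Complex.exp_ofReal_mul_I_im, Complex.exp_ofReal_mul_I_im, Real.cos_sub]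
    linear_combination a ^ 2 * Real.sin_sq_add_cos_sq u + b ^ 2 * Real.sin_sq_add_cos_sq v
  rw [law_of_cosines, Real.sin_sq_eq_half_sub, mul_div_cancel₀ (u - v) two_ne_zero]
  ring

lemma sq_sub_sq_mul_le {K : Type*} [Field K] [LinearOrder K] [IsStrictOrderedRing K]
    {a b t : K} (hb : 0 ≤ b) (hba : b ≤ a) (ht : t ≤ 1 / 2) :
    (a ^ 2 - b ^ 2) * t ≤ (a - b) ^ 2 + 4 * (a * b) * (2 * t) ^ 2 := by
  have completed_square : 0 ≤ (a - b - 2 * b * t) ^ 2 / 2 + (a - b) ^ 2 * (1 / 2 - t)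
      + 14 * (b * t) ^ 2 + 16 * (b * (a - b)) * t ^ 2 := by
    have := sub_nonneg.2 hba
    have := sub_nonneg.2 ht
    positivity
  linear_combination completed_square

lemma sq_sub_sq_mul_abs_sub_round_le_dist_sq {a b : ℝ} (hb : 0 ≤ b) (hba : b ≤ a) (x y : ℝ) :
    (a ^ 2 - b ^ 2) * |x - y - round (x - y)| ≤
      dist (a * Complex.exp (2 * Real.pi * Complex.I * x))
        (b * Complex.exp (2 * Real.pi * Complex.I * y)) ^ 2 := by
  have angle (z : ℝ) : 2 * Real.pi * Complex.I * z = ((2 * Real.pi * z : ℝ) : ℂ) * Complex.I := by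
    push_cast; ring
  have half_angle : (2 * Real.pi * x - 2 * Real.pi * y) / 2 = Real.pi * (x - y) := by ring
  have ha : 0 ≤ a := hb.trans hba
  calc (a ^ 2 - b ^ 2) * |x - y - round (x - y)|
      ≤ (a - b) ^ 2 + 4 * (a * b) * (2 * |x - y - round (x - y)|) ^ 2 :=
        sq_sub_sq_mul_le hb hba (abs_sub_round (x - y))
    _ ≤ (a - b) ^ 2 + 4 * (a * b) * |Real.sin (Real.pi * (x - y))| ^ 2 := by
        gcongr
        exact two_mul_abs_sub_round_le_abs_sin_pi_mul (x - y)
    _ = _ := by rw [sq_abs, angle, angle, dist_ofReal_mul_exp_sq, half_angle]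

lemma subsingleton_inter_ball_half_of_pairwise_le_dist {X : Type*} [PseudoMetricSpace X] {s : Set X}
    {r : ℝ} (hs : s.Pairwise fun z w ↦ r ≤ dist z w) (x : X) :
    (s ∩ Metric.ball x (r / 2)).Subsingleton := by
  rintro z ⟨hz, hzx⟩ w ⟨hw, hwx⟩
  by_contra hne
  have := dist_triangle_right z w x
  linarith [hs hz hw hne, Metric.mem_ball.1 hzx, Metric.mem_ball.1 hwx]

theorem fermatSpiral_uniformlyDiscrete_of_badlyApproximable_general (α C : ℝ)
    (hbad : ∀ (p : ℤ) (q : ℕ), 1 ≤ q → C ≤ (q : ℝ) * |(q : ℝ) * α - (p : ℝ)|) :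
    (fermatSpiral α).Pairwise fun z w ↦ C ≤ dist z w ^ 2 := by
  rintro _ ⟨m, rfl⟩ _ ⟨n, rfl⟩ hne
  wlog hnm : n < m generalizing m n
  · have hmn : m < n := lt_of_le_of_ne (not_lt.1 hnm) fun h ↦ hne (h ▸ rfl)
    rw [dist_comm]
    exact this n m hne.symm hmn
  have hsep := sq_sub_sq_mul_abs_sub_round_le_dist_sq (Real.sqrt_nonneg n)
    (Real.sqrt_le_sqrt (Nat.cast_le.2 hnm.le)) (m * α) (n * α)
  have happrox := hbad (round (m * α - n * α)) (m - n) (Nat.sub_pos_of_lt hnm)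
  rw [Real.sq_sqrt m.cast_nonneg, Real.sq_sqrt n.cast_nonneg] at hsep
  rw [Nat.cast_sub hnm.le, sub_mul (m : ℝ) n α] at happrox
  push_cast at hsep
  exact happrox.trans hsep

/-- Let `α ∈ [0,1)` be irrational and suppose `C > 0` satisfies
`q·|qα − p| ≥ C` for all `p ∈ ℤ` and all integers `q ≥ 1`. Then `X(√t, α)` is
`√C/2`-uniformly discrete: every open ball of radius `√C/2` contains at most one
of its points. -/
theorem fermatSpiral_uniformlyDiscrete_of_badlyApproximable
    (α : ℝ) (hα : α ∈ Set.Ico (0 : ℝ) 1) (hirr : Irrational α)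
    (C : ℝ) (hC : 0 < C)
    (hbad : ∀ (p : ℤ) (q : ℕ), 1 ≤ q → C ≤ (q : ℝ) * |(q : ℝ) * α - (p : ℝ)|) :
    ∀ x : ℂ, Set.Subsingleton (fermatSpiral α ∩ Metric.ball x (Real.sqrt C / 2)) :=
  subsingleton_inter_ball_half_of_pairwise_le_dist fun _ hz _ hw hne ↦ Real.sqrt_le_iff.2
    ⟨dist_nonneg, fermatSpiral_uniformlyDiscrete_of_badlyApproximable_general α C hbad hz hw hne⟩
end
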